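/- Let G be a finite group of order 2v with a normal subgroup N = {1, z} of order 2, and let S ⊆ G be a (2v, 2k+1, 2β) sum set that is type 2 with respect to N. Then the image P of S \ N under the quotient map G → G/N is a (v, k, β−1, β) partial sum set in G/N. -/

import Mathlib

/-!
Let `w α` be the number of elements of `S` in the coset `α ∈ G ⧸ N`. Being of type 2 says that
`w = e + 2 p`, where `e` is the indicator of the identity and `p` that of the image `P` of `S \ N`
(`cosetWeight_eq`). The quotient map turns counting products in `G` into convolving `w` with itself
(`sum_sumReps_fiber`), so for `α ≠ 1`, whose coset consists of two nonidentity elements,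
`4 β = (w * w) α = 4 p α + 4 (p * p) α`; and `(p * p) α` is the number of representations
of `α` as a product of two elements of `P`. Hence this number is `β - 1` on `P` and `β` off `P`.
Summing `w` over all cosets gives `2 k + 1 = 1 + 2 |P|`.
-/

open scoped Pointwise

/-- The number of ways to write `g` as a product of two elements of `S`. -/
noncomputable def sumReps {G : Type*} [Group G] (S : Set G) (g : G) : ℕ :=
  Set.ncard {p : G × G | p.1 ∈ S ∧ p.2 ∈ S ∧ p.1 * p.2 = g}

/-- `S` is a `(v,k,λ,μ)` partial sum set: every nonidentity element of `S` has exactly `λ`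
representations as a product of two elements of `S`, and every nonidentity element outside
`S` has exactly `μ` such representations. -/
def IsPartialSumSet {G : Type*} [Group G] (S : Set G) (lam mu : ℕ) : Prop :=
  (∀ g ∈ S, g ≠ 1 → sumReps S g = lam) ∧ (∀ g : G, g ∉ S → g ≠ 1 → sumReps S g = mu)

/-- `S` is a `(v,k,μ)` sum set: every nonidentity element of `G` has exactly `μ`
representations as a product of two elements of `S`. -/
def IsSumSet {G : Type*} [Group G] (S : Set G) (mu : ℕ) : Prop :=
  ∀ g : G, g ≠ 1 → sumReps S g = mu

open scoped Classical in
/-- The `ℕ`-valued indicator function of `S`. -/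
noncomputable def ind {X : Type*} (S : Set X) (x : X) : ℕ := if x ∈ S then 1 else 0

theorem ncard_eq_sum_ind {X : Type*} [Fintype X] (S : Set X) : S.ncard = ∑ x, ind S x := by
  classical
  rw [Set.ncard_eq_toFinset_card']
  simp [ind, -Set.toFinset_card, Set.filter_mem_univ_eq_toFinset]

theorem sumReps_eq_sum {G : Type*} [Group G] [Fintype G] (S : Set G) (g : G) :
    sumReps S g = ∑ x, ind S x * ind S (x⁻¹ * g) := by
  classical
  have e : {p : G × G | p.1 ∈ S ∧ p.2 ∈ S ∧ p.1 * p.2 = g} =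
      (fun x => (x, x⁻¹ * g)) '' {x | x ∈ S ∧ x⁻¹ * g ∈ S} := by
    ext ⟨a, b⟩
    simp only [Set.mem_ofPred_eq, Set.mem_image, Prod.mk.injEq]
    constructor
    · rintro ⟨ha, hb, rfl⟩
      exact ⟨a, ⟨ha, by simpa using hb⟩, rfl, by simp⟩
    · rintro ⟨x, ⟨hx, hy⟩, rfl, rfl⟩
      exact ⟨hx, hy, by simp⟩
  rw [sumReps, e, Set.ncard_image_of_injective _ fun a b hab => (Prod.mk.inj hab).1,
    ncard_eq_sum_ind]
  refine Finset.sum_congr rfl fun x _ => ?_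
  by_cases h1 : x ∈ S <;> by_cases h2 : x⁻¹ * g ∈ S <;> simp [ind, h1, h2]

section Quotient

variable {G : Type*} [Group G] (N : Subgroup G)

/-- The number of elements of `S` in the coset `α`. -/
noncomputable def cosetWeight (S : Set G) (α : G ⧸ N) : ℕ :=
  (S ∩ {x : G | (x : G ⧸ N) = α}).ncard

open scoped Classical in
theorem cosetWeight_eq_sum [Fintype G] (S : Set G) (α : G ⧸ N) :
    cosetWeight N S α = ∑ x : G, if (x : G ⧸ N) = α then ind S x else 0 := by
  rw [cosetWeight, ncard_eq_sum_ind]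
  refine Finset.sum_congr rfl fun x _ => ?_
  by_cases h1 : x ∈ S <;> by_cases h2 : (x : G ⧸ N) = α <;> simp [ind, h1, h2]

open scoped Classical in
theorem sum_mul_cosetWeight [Fintype G] (S : Set G) (f : G ⧸ N → ℕ) :
    ∑ a, cosetWeight N S a * f a = ∑ x : G, ind S x * f x := by
  simp_rw [cosetWeight_eq_sum, Finset.sum_mul]
  rw [Finset.sum_comm]
  simp [ite_mul]

open scoped Classical in
/-- Counting the pairs of `S × S` with product in the coset `α` amounts to convolving the
coset weights. -/
theorem sum_sumReps_fiber [Fintype G] [N.Normal] (S : Set G) (α : G ⧸ N) :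
    (∑ g : G, if (g : G ⧸ N) = α then sumReps S g else 0) =
      ∑ a, cosetWeight N S a * cosetWeight N S (a⁻¹ * α) := by
  rw [sum_mul_cosetWeight N S fun a => cosetWeight N S (a⁻¹ * α)]
  calc _ = ∑ g : G, ∑ x : G,
        if (g : G ⧸ N) = α then ind S x * ind S (x⁻¹ * g) else 0 := by
        refine Finset.sum_congr rfl fun g _ => ?_
        rw [sumReps_eq_sum]
        split_ifs <;> simp
    _ = _ := by
        rw [Finset.sum_comm]
        refine Finset.sum_congr rfl fun x _ => ?_
        rw [cosetWeight_eq_sum, Finset.mul_sum, ← Equiv.sum_comp (Equiv.mulLeft x)]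
        refine Finset.sum_congr rfl fun y _ => ?_
        simp [eq_inv_mul_iff_mul_eq]

theorem ncard_fiber (α : G ⧸ N) : ({x : G | (x : G ⧸ N) = α}).ncard = Nat.card N := by
  obtain ⟨g, rfl⟩ := QuotientGroup.mk_surjective α
  have e : {x : G | (x : G ⧸ N) = g} = (fun x => g * x) '' (N : Set G) := by
    ext x
    simp only [Set.mem_ofPred_eq, Set.mem_image, SetLike.mem_coe]
    rw [eq_comm, QuotientGroup.eq]
    exact ⟨fun h => ⟨_, h, by simp⟩, by rintro ⟨y, hy, rfl⟩; simpa using hy⟩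
  rw [e, Set.ncard_image_of_injective _ (mul_right_injective g)]
  rfl

/-- The type 2 conditions say that `S` meets the trivial coset once and each coset in the image of
`S \ N` twice; it misses every other coset. -/
theorem cosetWeight_eq [Finite G] [N.Normal] {S : Set G} (ht2a : (S ∩ (N : Set G)).ncard = 1)
    (ht2b : ∀ α : G ⧸ N, α ≠ 1 → cosetWeight N S α = 0 ∨ cosetWeight N S α = 2) (α : G ⧸ N) :
    cosetWeight N S α =
      ind {1} α + 2 * ind ((fun x : G => (x : G ⧸ N)) '' (S \ (N : Set G))) α := by
  by_cases h1 : α = 1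
  · subst h1
    have : (1 : G ⧸ N) ∉ (fun x : G => (x : G ⧸ N)) '' (S \ (N : Set G)) := by
      rintro ⟨x, ⟨_, hx⟩, h⟩
      exact hx ((QuotientGroup.eq_one_iff x).1 h)
    simp [cosetWeight, ht2a, ind, this]
  · by_cases hP : α ∈ (fun x : G => (x : G ⧸ N)) '' (S \ (N : Set G))
    · have h0 : cosetWeight N S α ≠ 0 := by
        obtain ⟨x, ⟨hx, _⟩, rfl⟩ := hP
        exact Set.ncard_ne_zero_of_mem (a := x) ⟨hx, rfl⟩
      have := (ht2b α h1).resolve_left h0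
      simp [this, ind, h1, hP]
    · have : S ∩ {x : G | (x : G ⧸ N) = α} = ∅ := by
        ext x
        simp only [Set.mem_inter_iff, Set.mem_ofPred_eq, Set.mem_empty_iff_false, iff_false]
        rintro ⟨hx, rfl⟩
        exact hP ⟨x, ⟨hx, fun hn => h1 ((QuotientGroup.eq_one_iff x).2 hn)⟩, rfl⟩
      simp [cosetWeight, this, ind, h1, hP]

end Quotient

theorem stmt_14 {G : Type*} [Group G] [Finite G] (N : Subgroup G) [N.Normal]
    (hN : Nat.card N = 2) (v k beta : ℕ) (hv : Nat.card G = 2 * v)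
    (S : Set G) (hk : S.ncard = 2 * k + 1) (h : IsSumSet S (2 * beta))
    (ht2a : (S ∩ (N : Set G)).ncard = 1)
    (ht2b : ∀ α : G ⧸ N, α ≠ 1 →
      (S ∩ {x : G | (x : G ⧸ N) = α}).ncard = 0 ∨ (S ∩ {x : G | (x : G ⧸ N) = α}).ncard = 2) :
    IsPartialSumSet ((fun x : G => (x : G ⧸ N)) '' (S \ (N : Set G))) (beta - 1) beta ∧
      ((fun x : G => (x : G ⧸ N)) '' (S \ (N : Set G))).ncard = k := by
  classical
  have := Fintype.ofFinite G
  have hw := cosetWeight_eq N ht2a ht2b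
  set P := (fun x : G => (x : G ⧸ N)) '' (S \ (N : Set G)) with hP
  have key : ∀ α : G ⧸ N, α ≠ 1 → sumReps P α + ind P α = beta := by
    intro α hα
    have h1 := sum_sumReps_fiber N S α
    have h2 : (∑ g : G, if (g : G ⧸ N) = α then sumReps S g else 0) = 2 * (2 * beta) := by
      have hc : ∑ g : G, ind {x : G | (x : G ⧸ N) = α} g = 2 := by
        rw [← ncard_eq_sum_ind, ncard_fiber, hN]
      refine .trans ?_ (congrArg (· * (2 * beta)) hc)
      rw [Finset.sum_mul]
      refine Finset.sum_congr rfl fun g _ => ?_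
      by_cases hg : (g : G ⧸ N) = α
      · have : g ≠ 1 := by rintro rfl; exact hα hg.symm
        simp [ind, hg, h g this]
      · simp [ind, hg]
    have h3 : ∑ a, cosetWeight N S a * cosetWeight N S (a⁻¹ * α) =
        4 * ind P α + 4 * sumReps P α := by
      -- the cross terms of `(e + 2 p) * (e + 2 p)` contribute `2 p α` each, and `e α = 0`
      have c1 : ∑ a, ind {1} a * (ind {1} (a⁻¹ * α) + 2 * ind P (a⁻¹ * α)) = 2 * ind P α := by
        simp [ind, hα]
      have c2 : ∑ a, ind P a * ind {1} (a⁻¹ * α) = ind P α := by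
        simp [ind, inv_mul_eq_one]
      calc _ = ∑ a, (ind {1} a * (ind {1} (a⁻¹ * α) + 2 * ind P (a⁻¹ * α)) +
            2 * (ind P a * ind {1} (a⁻¹ * α)) + 4 * (ind P a * ind P (a⁻¹ * α))) :=
            Finset.sum_congr rfl fun a _ => by rw [hw, hw]; ring
        _ = _ := by
          rw [Finset.sum_add_distrib, Finset.sum_add_distrib, c1, ← Finset.mul_sum, c2,
            ← Finset.mul_sum, ← sumReps_eq_sum]
          ring
    omega
  refine ⟨⟨fun α hα h1 => ?_, fun α hα h1 => ?_⟩, ?_⟩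
  · have := key α h1
    simp only [ind, hα, if_true] at this
    omega
  · simpa [ind, hα] using key α h1
  · have h1 := sum_mul_cosetWeight N S fun _ => 1
    simp only [mul_one] at h1
    rw [← ncard_eq_sum_ind, hk, Finset.sum_congr rfl fun a _ => hw a, Finset.sum_add_distrib,
      ← Finset.mul_sum, ← ncard_eq_sum_ind, ← ncard_eq_sum_ind, Set.ncard_singleton] at h1
    omega
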